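/- Let r ≥ 1 and let m_1,…,m_q be square-free monomials forming a minimal generating set. Let i ≠ j be indices in {1,…,q} and let M be any monomial. If there exist a ∈ F^r_i ∪ G^r_i with m^a dividing M and b ∈ F^r_j ∪ G^r_j with m^b dividing M, then there exists c ∈ B^r with m^c dividing M. -/

import Mathlib

/-!
STATEMENT 11: Let r ≥ 1 and let m_1,…,m_q be square-free monomials forming a minimal
generating set. Let i ≠ j and let M be any monomial. If there exist a ∈ F^r_i ∪ G^r_i
with m^a ∣ M and b ∈ F^r_j ∪ G^r_j with m^b ∣ M, then there exists c ∈ B^r with m^c ∣ M.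

Monomials are identified with their exponent vectors in ℕ^n; divisibility is the
componentwise order. Here s = ⌈r/2⌉ = (r+1)/2.
-/

open Finset

/-- The exponent vector of `m^a = m_1^{a_1} ⋯ m_q^{a_q}`. -/
def mpow {n q : ℕ} (m : Fin q → Fin n → ℕ) (a : Fin q → ℕ) : Fin n → ℕ :=
  fun k => ∑ j, a j * m j k

/-- The set `B^r`, with `s = ⌈r/2⌉ = (r+1)/2`. -/
def Bset (r q : ℕ) : Set (Fin q → ℕ) :=
  {a | (∑ k, a k = r) ∧ ∀ i, a i ≤ (r + 1) / 2}

/-- The set `F^r_i`, with `s = ⌈r/2⌉ = (r+1)/2`. -/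
def Fset (r q : ℕ) (i : Fin q) : Set (Fin q → ℕ) :=
  {a | (∑ k, a k = r) ∧ a i ≤ max (r - 1) ((r + 1) / 2) ∧
    ∀ j, j ≠ i → a j ≤ (r + 1) / 2}

/-- The set `G^r_i`. -/
def Gset (r q : ℕ) (i : Fin q) : Set (Fin q → ℕ) :=
  {a | (∑ k, a k = r) ∧ r - 1 ≤ a i}

theorem mpow_add_single {n q : ℕ} (m : Fin q → Fin n → ℕ) (d : Fin q → ℕ) (j : Fin q)
    (t : ℕ) (k : Fin n) : mpow m (d + Pi.single j t) k = mpow m d k + t * m j k := by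
  simp [mpow, add_mul, sum_add_distrib, Pi.single_apply]

theorem mul_le_mpow {n q : ℕ} (m : Fin q → Fin n → ℕ) (b : Fin q → ℕ) (j : Fin q)
    (k : Fin n) : b j * m j k ≤ mpow m b k :=
  single_le_sum (f := fun l => b l * m l k) (fun _ _ => Nat.zero_le _) (mem_univ j)

/-- If the square-free monomial `m i` misses the variable `k`, then the exponent of `k` in `m^d`
is at most the sum of the entries of `d` other than `d i`. -/
theorem mpow_add_le_sum {n q : ℕ} {m : Fin q → Fin n → ℕ} (hsf : ∀ j k, m j k ≤ 1)
    (d : Fin q → ℕ) {i : Fin q} {k : Fin n} (hik : m i k = 0) :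
    mpow m d k + d i ≤ ∑ l, d l := by
  rw [mpow, ← add_sum_erase univ d (mem_univ i),
    ← add_sum_erase univ (fun l => d l * m l k) (mem_univ i)]
  have h : ∑ l ∈ univ.erase i, d l * m l k ≤ ∑ l ∈ univ.erase i, d l :=
    sum_le_sum fun l _ => mul_le_of_le_one_right (Nat.zero_le _) (hsf l k)
  simp only [hik]
  omega

theorem add_apply_le_sum {q : ℕ} (a : Fin q → ℕ) {i l : Fin q} (h : l ≠ i) :
    a l + a i ≤ ∑ k, a k := by
  rw [← sum_pair h]
  exact sum_le_sum_of_subset (subset_univ _)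

/-- An element of `F^r_i ∪ G^r_i` lies in `B^r` unless its `i`-th entry exceeds `⌈r/2⌉`. -/
theorem mem_Bset_or_lt {q r : ℕ} (hr : 1 ≤ r) {i : Fin q} {a : Fin q → ℕ}
    (ha : a ∈ Fset r q i ∪ Gset r q i) :
    a ∈ Bset r q ∨ (∑ k, a k = r ∧ (r + 1) / 2 < a i) := by
  have hs : ∑ k, a k = r := ha.elim (·.1) (·.1)
  refine (le_or_gt (a i) ((r + 1) / 2)).imp (fun hle => ⟨hs, fun l => ?_⟩) fun h => ⟨hs, h⟩
  rcases eq_or_ne l i with rfl | hl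
  · exact hle
  rcases ha with ha | ha
  · exact ha.2.2 l hl
  · have h1 := ha.2
    have h2 := add_apply_le_sum a hl
    omega

theorem first_layers_connect_through_base {n q r : ℕ} (hr : 1 ≤ r)
    (m : Fin q → Fin n → ℕ)
    (hsf : ∀ j k, m j k ≤ 1)
    (hmin : ∀ i j, i ≠ j → ¬ m i ≤ m j)
    (i j : Fin q) (hij : i ≠ j) (M : Fin n → ℕ)
    (hA : ∃ a ∈ Fset r q i ∪ Gset r q i, mpow m a ≤ M)
    (hB : ∃ b ∈ Fset r q j ∪ Gset r q j, mpow m b ≤ M) :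
    ∃ c ∈ Bset r q, mpow m c ≤ M := by
  obtain ⟨a, ha, haM⟩ := hA
  obtain ⟨b, hb, hbM⟩ := hB
  rcases mem_Bset_or_lt hr ha with ha | ⟨hsum, hai⟩
  · exact ⟨a, ha, haM⟩
  rcases mem_Bset_or_lt hr hb with hb | ⟨-, hbj⟩
  · exact ⟨b, hb, hbM⟩
  -- Lower the `i`-th entry of `a` to `⌈r/2⌉` and move the excess `u` to the `j`-th entry.
  obtain ⟨d, u, had, hdi⟩ :
      ∃ (d : Fin q → ℕ) (u : ℕ), a = d + Pi.single i u ∧ d i = (r + 1) / 2 := by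
    refine ⟨Function.update a i ((r + 1) / 2), a i - (r + 1) / 2, ?_, by simp⟩
    ext l
    rcases eq_or_ne l i with rfl | hl
    · simp [hai.le]
    · simp [hl]
  subst had
  have hsum' : ∑ l, d l + u = r := by
    simpa [sum_add_distrib] using hsum
  refine ⟨d + Pi.single j u, ⟨by simpa [sum_add_distrib] using hsum', fun l => ?_⟩, fun k => ?_⟩
  · rcases eq_or_ne l i with rfl | hl
    · simp [hij, hdi]
    · have h1 := add_apply_le_sum d hl
      have h2 : (Pi.single j u : Fin q → ℕ) l ≤ u := by
        rw [Pi.single_apply]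
        split <;> simp
      simp only [Pi.add_apply]
      omega
  · have hak := haM k
    rw [mpow_add_single] at hak ⊢
    rcases Nat.le_one_iff_eq_zero_or_eq_one.mp (hsf j k) with hj | hj
    · simpa [hj] using (Nat.le_add_right _ _).trans hak
    rcases Nat.le_one_iff_eq_zero_or_eq_one.mp (hsf i k) with hi | hi
    · have h1 := mpow_add_le_sum hsf d hi
      have h2 := (mul_le_mpow m b j k).trans (hbM k)
      simp only [hj, mul_one] at h2 ⊢
      omega
    · rwa [hj, ← hi]
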